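/- Let ξ ∈ (0,1] be a constant. There exist constants C₀, C₁ > 0 (depending only on ξ) such that the following holds: if G is a d-regular graph on n vertices with d = n^ξ, and G satisfies the δ-small-set α-bipartite density condition for some α ∈ (√d, d] with α ≤ d/(C₀·(log d)²) and some δ ∈ (0,1] with δ ≥ C₀·α/d, then, setting c := 1 − (log α)/(log d) (so that α = d^{1−c}), for every integer t ≥ 4/(c·ξ) + 1 one has d_TV(t) ≤ (1/4)·√(1−δ) + C₁ / n^{cξ/8}. -/

import Mathlib

open Finset

/-- The random-walk matrix `P = A/d` of a graph `G` (intended: `d`-regular). -/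
noncomputable def walkMatrix {n : ℕ} (G : SimpleGraph (Fin n)) [DecidableRel G.Adj]
    (d : ℕ) : Matrix (Fin n) (Fin n) ℝ :=
  (d : ℝ)⁻¹ • G.adjMatrix ℝ

/-- `p` is a probability distribution on `Fin n`. -/
def IsProbDist {n : ℕ} (p : Fin n → ℝ) : Prop :=
  (∀ v, 0 ≤ p v) ∧ ∑ v, p v = 1

/-- Total variation distance of `p` from the uniform distribution on `Fin n`. -/
noncomputable def tvFromUniform {n : ℕ} (p : Fin n → ℝ) : ℝ :=
  (1 / 2) * ∑ v, |p v - 1 / (n : ℝ)|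

/-- `d_TV(t)`: worst-case total variation distance from uniform after `t` steps
of the random walk. -/
noncomputable def dTV {n : ℕ} (G : SimpleGraph (Fin n)) [DecidableRel G.Adj]
    (d t : ℕ) : ℝ :=
  sSup {x : ℝ | ∃ p : Fin n → ℝ, IsProbDist p ∧
    x = tvFromUniform ((walkMatrix G d ^ t).mulVec p)}

/-- The `ε`-mixing time `τ_ε(P)`. -/
noncomputable def mixingTime {n : ℕ} (G : SimpleGraph (Fin n)) [DecidableRel G.Adj]
    (d : ℕ) (ε : ℝ) : ℕ :=
  sInf {t : ℕ | dTV G d t ≤ ε}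

/-- `|E(S,T)|`: the number of ordered edges `(u,v)` with `u ∈ S`, `v ∈ T`, `uv ∈ E`. -/
def bipCount {n : ℕ} (G : SimpleGraph (Fin n)) [DecidableRel G.Adj]
    (S T : Finset (Fin n)) : ℕ :=
  ((S ×ˢ T).filter (fun e => G.Adj e.1 e.2)).card

/-- The `α`-bipartite density condition. -/
def BipDensity {n : ℕ} (G : SimpleGraph (Fin n)) [DecidableRel G.Adj]
    (d : ℕ) (α : ℝ) : Prop :=
  ∀ S T : Finset (Fin n),
    (bipCount G S T : ℝ) ≤ d * S.card * T.card / n + α * Real.sqrt (S.card * T.card)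

/-- The `δ`-small-set `α`-bipartite density condition. -/
def SmallSetBipDensity {n : ℕ} (G : SimpleGraph (Fin n)) [DecidableRel G.Adj]
    (d : ℕ) (α δ : ℝ) : Prop :=
  ∀ S T : Finset (Fin n), (S.card : ℝ) ≤ δ * n → (T.card : ℝ) ≤ δ * n →
    (bipCount G S T : ℝ) ≤ d * S.card * T.card / n + α * Real.sqrt (S.card * T.card)

/-- Any finset `S` contains a subset of size `min |S| m` on which the average of `w` is at least
its average on `S`. -/
theorem exists_subset_card_min_average_ge {ι : Type*} [DecidableEq ι] (w : ι → ℝ) (m : ℕ)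
    (S : Finset ι) :
    ∃ S' ⊆ S, S'.card = min S.card m ∧
      (S'.card : ℝ) * ∑ v ∈ S, w v ≤ S.card * ∑ v ∈ S', w v := by
  induction S using Finset.strongInduction with
  | H S ih =>
    rcases le_or_gt S.card m with h | h
    · exact ⟨S, Subset.refl _, by simp [h], le_rfl⟩
    · have hne : S.Nonempty := card_pos.1 (by omega)
      obtain ⟨x, hx, hmin⟩ := S.exists_min_image w hne
      obtain ⟨S', hsub, hcard, hle⟩ := ih (S.erase x) (erase_ssubset hx)
      have hc : (S.erase x).card + 1 = S.card := card_erase_add_one hx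
      refine ⟨S', hsub.trans (erase_subset _ _), by omega, ?_⟩
      have hsum : ∑ v ∈ S, w v = ∑ v ∈ S.erase x, w v + w x := (sum_erase_add _ _ hx).symm
      rcases Nat.eq_zero_or_pos (S.erase x).card with h0 | hpos
      · have : S'.card = 0 := by omega
        rw [card_eq_zero.1 this]
        simp
      · have havg : ((S.erase x).card : ℝ) * w x ≤ ∑ v ∈ S.erase x, w v := by
          rw [← nsmul_eq_mul]
          exact card_nsmul_le_sum _ _ _ fun v hv => hmin v (mem_of_mem_erase hv)
        have hpos' : (0 : ℝ) < (S.erase x).card := by exact_mod_cast hpos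
        have hc' : (S.card : ℝ) = (S.erase x).card + 1 := by exact_mod_cast hc.symm
        rw [hsum, hc']
        set e : ℝ := ((S.erase x).card : ℝ)
        set a := ∑ v ∈ S.erase x, w v
        set b := ∑ v ∈ S', w v
        have hk : (0 : ℝ) ≤ S'.card := by positivity
        refine le_of_mul_le_mul_left ?_ hpos'
        nlinarith [mul_le_mul_of_nonneg_left havg hk, mul_le_mul_of_nonneg_left hle
          (by positivity : (0 : ℝ) ≤ e + 1)]

theorem bipCount_eq_sum {n : ℕ} (G : SimpleGraph (Fin n)) [DecidableRel G.Adj]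
    (S T : Finset (Fin n)) :
    (bipCount G S T : ℝ) = ∑ u ∈ S, ∑ v ∈ T, G.adjMatrix ℝ u v := by
  simp only [bipCount, SimpleGraph.adjMatrix_apply]
  rw [card_filter, sum_product]
  push_cast
  rfl

theorem div_sqrt_min_le (k m : ℕ) (hm : 0 < m) :
    (k : ℝ) / √((min k m : ℕ) : ℝ) ≤ √k + k / √m := by
  rcases le_total k m with h | h
  · rw [min_eq_left h, Real.div_sqrt]
    exact le_add_of_nonneg_right (by positivity)
  · rw [min_eq_right h]
    exact le_add_of_nonneg_left (by positivity)

/-- A small-set density condition extends to all sets with a weaker error term. -/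
theorem SmallSetBipDensity.bipCount_le {n d : ℕ} {G : SimpleGraph (Fin n)} [DecidableRel G.Adj]
    {α δ : ℝ} (h : SmallSetBipDensity G d α δ) (hα : 0 ≤ α) {m : ℕ} (hm : 0 < m)
    (hmδ : (m : ℝ) ≤ δ * n) (S T : Finset (Fin n)) :
    (bipCount G S T : ℝ) ≤ d / n * (S.card * T.card) +
      α * ((√S.card + S.card / √m) * (√T.card + T.card / √m)) := by
  rcases S.eq_empty_or_nonempty with rfl | hS
  · simp [bipCount]
  rcases T.eq_empty_or_nonempty with rfl | hT
  · simp [bipCount]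
  obtain ⟨S', -, hSc, hSle⟩ :=
    exists_subset_card_min_average_ge (fun u => ∑ v ∈ T, G.adjMatrix ℝ u v) m S
  obtain ⟨T', -, hTc, hTle⟩ :=
    exists_subset_card_min_average_ge (fun v => ∑ u ∈ S', G.adjMatrix ℝ u v) m T
  have hsmall : ∀ {k : ℕ} {X : Finset (Fin n)}, X.card = min k m → (X.card : ℝ) ≤ δ * n := by
    intro k X hX
    refine le_trans ?_ hmδ
    exact_mod_cast hX ▸ min_le_right _ _
  have hd := h S' T' (hsmall hSc) (hsmall hTc)
  rw [sum_comm] at hTle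
  rw [sum_comm (s := T')] at hTle
  rw [← bipCount_eq_sum] at hTle hSle
  rw [← bipCount_eq_sum] at hTle hSle
  have hs : (0 : ℝ) < S.card := by exact_mod_cast hS.card_pos
  have ht : (0 : ℝ) < T.card := by exact_mod_cast hT.card_pos
  have hs' : (0 : ℝ) < S'.card := by
    have := hS.card_pos
    exact_mod_cast (by omega : 0 < S'.card)
  have ht' : (0 : ℝ) < T'.card := by
    have := hT.card_pos
    exact_mod_cast (by omega : 0 < T'.card)
  have hSd := div_sqrt_min_le S.card m hm
  have hTd := div_sqrt_min_le T.card m hm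
  rw [← hSc] at hSd
  rw [← hTc] at hTd
  have hmain : (bipCount G S T : ℝ) ≤ d / n * (S.card * T.card) +
      α * ((S.card / √S'.card) * (T.card / √T'.card)) := by
    have h1 : (S'.card : ℝ) * T'.card * bipCount G S T ≤
        S.card * T.card * (d * S'.card * T'.card / n + α * √(S'.card * T'.card)) := by
      nlinarith [mul_le_mul_of_nonneg_left hSle ht'.le, mul_le_mul_of_nonneg_left hTle hs.le,
        mul_le_mul_of_nonneg_left hd (mul_pos hs ht).le]
    refine le_of_mul_le_mul_left (h1.trans_eq ?_) (mul_pos hs' ht')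
    rw [Real.sqrt_mul hs'.le]
    have e1 : (S'.card : ℝ) = √S'.card * √S'.card := (Real.mul_self_sqrt hs'.le).symm
    have e2 : (T'.card : ℝ) = √T'.card * √T'.card := (Real.mul_self_sqrt ht'.le).symm
    have p1 : 0 < √(S'.card : ℝ) := Real.sqrt_pos.2 hs'
    have p2 : 0 < √(T'.card : ℝ) := Real.sqrt_pos.2 ht'
    generalize √(S'.card : ℝ) = x at *
    generalize √(T'.card : ℝ) = y at *
    rw [e1, e2]
    field_simp
  refine hmain.trans ?_
  gcongr

theorem sum_range_sub_succ_mul (a w : ℕ → ℝ) (hw : w 0 = 0) (N : ℕ) :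
    ∑ k ∈ range N, (a k - a (k + 1)) * w (k + 1) =
      ∑ k ∈ range N, a k * (w (k + 1) - w k) - a N * w N := by
  induction N with
  | zero => simp [hw]
  | succ N ih => rw [sum_range_succ, sum_range_succ, ih]; ring

theorem sqrt_succ_sub_sqrt_le (k : ℕ) : √((k : ℝ) + 1) - √k ≤ 1 / √((k : ℝ) + 1) := by
  have h : 0 < √((k : ℝ) + 1) := by positivity
  rw [le_div_iff₀ h]
  nlinarith [Real.mul_self_sqrt (by positivity : (0 : ℝ) ≤ (k : ℝ) + 1),
    Real.mul_self_sqrt (by positivity : (0 : ℝ) ≤ k), Real.sqrt_nonneg (k : ℝ),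
    Real.sqrt_le_sqrt (by linarith : (k : ℝ) ≤ k + 1)]

/-- Layer decomposition of a nonnegative function as a combination of indicators of a chain, with
the Lorentz `L^{2,1}` norm controlled by the `L²` norm. -/
theorem exists_layer_decomposition {n : ℕ} (f : Fin n → ℝ) (hf : ∀ i, 0 ≤ f i) :
    ∃ (c : ℕ → ℝ) (S : ℕ → Finset (Fin n)), (∀ k, 0 ≤ c k) ∧
      (∀ k ∈ range n, (S k).card = k + 1) ∧
      (∀ i, f i = ∑ k ∈ range n, if i ∈ S k then c k else 0) ∧
      ∑ k ∈ range n, c k * √((k : ℝ) + 1) ≤ √(1 + Real.log n) * √(∑ i, f i ^ 2) := by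
  let σ := Tuple.sort (fun i => -f i)
  have hσ : ∀ i j, i ≤ j → f (σ j) ≤ f (σ i) := fun i j hij => by
    have := Tuple.monotone_sort (fun i => -f i) hij
    simpa using this
  let a : ℕ → ℝ := fun k => if h : k < n then f (σ ⟨k, h⟩) else 0
  have ha0 : ∀ k, 0 ≤ a k := fun k => by
    simp only [a]; split_ifs
    · exact hf _
    · exact le_rfl
  have han : a n = 0 := by simp [a]
  have hanti : ∀ k, a (k + 1) ≤ a k := fun k => by
    by_cases h : k + 1 < n
    · have h' : k < n := by omega
      simp only [a, h, h', dif_pos]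
      exact hσ _ _ (by simp)
    · simpa [a, h] using ha0 k
  have hval : ∀ i : Fin n, f (σ i) = a i := fun i => by simp [a]
  refine ⟨fun k => a k - a (k + 1), fun k => (univ.filter fun i : Fin n => (i : ℕ) ≤ k).image σ,
    fun k => sub_nonneg.2 (hanti k), fun k hk => ?_, fun i => ?_, ?_⟩
  · rw [mem_range] at hk
    rw [card_image_of_injective _ σ.injective]
    have : (univ.filter fun i : Fin n => (i : ℕ) ≤ k) = Iic (⟨k, hk⟩ : Fin n) := by
      ext i; simp [Fin.le_def]
    rw [this, Fin.card_Iic]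
  · obtain ⟨i, rfl⟩ := σ.surjective i
    have hmem : ∀ k, σ i ∈ (univ.filter fun i : Fin n => (i : ℕ) ≤ k).image σ ↔ (i : ℕ) ≤ k := by
      intro k; simp
    simp only [hmem]
    rw [← sum_filter, hval]
    have : (range n).filter (fun k => (i : ℕ) ≤ k) = Ico (i : ℕ) n := by
      ext k; simp [and_comm]
    rw [this, ← neg_inj, ← sum_neg_distrib]
    simp only [neg_sub]
    rw [sum_Ico_sub a i.2.le, han, zero_sub]
  · have habel := sum_range_sub_succ_mul a (fun k => √(k : ℝ)) (by simp) n
    push_cast at habel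
    rw [habel, han, zero_mul, sub_zero]
    calc ∑ k ∈ range n, a k * (√((k : ℝ) + 1) - √k)
        ≤ ∑ k ∈ range n, (1 / √((k : ℝ) + 1)) * a k := by
          refine sum_le_sum fun k _ => ?_
          rw [mul_comm]
          exact mul_le_mul_of_nonneg_right (sqrt_succ_sub_sqrt_le k) (ha0 k)
      _ ≤ √(∑ k ∈ range n, (1 / √((k : ℝ) + 1)) ^ 2) * √(∑ k ∈ range n, a k ^ 2) :=
          Real.sum_mul_le_sqrt_mul_sqrt _ _ _
      _ ≤ _ := by
          have h1 : ∑ k ∈ range n, (1 / √((k : ℝ) + 1)) ^ 2 ≤ 1 + Real.log n := by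
            refine le_trans (le_of_eq ?_) (harmonic_le_one_add_log n)
            rw [harmonic]
            push_cast
            refine sum_congr rfl fun k _ => ?_
            rw [div_pow, Real.sq_sqrt (by positivity), one_pow, one_div]
          have h2 : ∑ k ∈ range n, a k ^ 2 = ∑ i, f i ^ 2 := by
            rw [← Fin.sum_univ_eq_sum_range (fun k => a k ^ 2)]
            simp only [← hval]
            exact Equiv.sum_comp σ (fun i => f i ^ 2)
          rw [h2]
          gcongr

/-- Bilinear form of the density condition on nonnegative functions. -/
theorem SmallSetBipDensity.bilin_le {n d : ℕ} {G : SimpleGraph (Fin n)} [DecidableRel G.Adj]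
    {α δ : ℝ} (h : SmallSetBipDensity G d α δ) (hα : 0 ≤ α) {m : ℕ} (hm : 0 < m)
    (hmδ : (m : ℝ) ≤ δ * n) (f g : Fin n → ℝ) (hf : ∀ i, 0 ≤ f i) (hg : ∀ i, 0 ≤ g i) :
    ∑ u, ∑ v, f u * G.adjMatrix ℝ u v * g v ≤ d / n * ((∑ u, f u) * ∑ v, g v) +
      α * ((√(1 + Real.log n) * √(∑ i, f i ^ 2) + (∑ u, f u) / √m) *
        (√(1 + Real.log n) * √(∑ i, g i ^ 2) + (∑ u, g u) / √m)) := by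
  obtain ⟨a, S, ha, hS, hfS, hfa⟩ := exists_layer_decomposition f hf
  obtain ⟨b, T, hb, hT, hgT, hgb⟩ := exists_layer_decomposition g hg
  have hsum : ∀ (f : Fin n → ℝ) (c : ℕ → ℝ) (S : ℕ → Finset (Fin n)),
      (∀ k ∈ range n, (S k).card = k + 1) →
      (∀ i, f i = ∑ k ∈ range n, if i ∈ S k then c k else 0) →
      ∑ i, f i = ∑ k ∈ range n, c k * ((k : ℝ) + 1) := by
    intro f c S hS hf
    simp only [hf]
    rw [sum_comm]
    refine sum_congr rfl fun k hk => ?_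
    rw [← sum_filter, filter_mem_eq_inter, univ_inter, sum_const, hS k hk, nsmul_eq_mul]
    push_cast; ring
  have hB : ∑ u, ∑ v, f u * G.adjMatrix ℝ u v * g v =
      ∑ k ∈ range n, ∑ l ∈ range n, a k * b l * (bipCount G (S k) (T l) : ℝ) := by
    have hind : ∀ (S T : Finset (Fin n)), (bipCount G S T : ℝ) =
        ∑ u, ∑ v, if u ∈ S then if v ∈ T then G.adjMatrix ℝ u v else 0 else 0 := by
      intro S T
      rw [bipCount_eq_sum]
      simp [sum_ite_mem]
    have hterm : ∀ u v, f u * G.adjMatrix ℝ u v * g v = ∑ k ∈ range n, ∑ l ∈ range n,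
        a k * b l * (if u ∈ S k then if v ∈ T l then G.adjMatrix ℝ u v else 0 else 0) := by
      intro u v
      rw [hfS, hgT, sum_mul, sum_mul_sum]
      refine sum_congr rfl fun k _ => sum_congr rfl fun l _ => ?_
      split_ifs <;> ring
    simp only [hind, hterm, mul_sum]
    rw [sum_congr rfl fun u _ => sum_comm, sum_comm]
    refine sum_congr rfl fun k _ => ?_
    rw [sum_congr rfl fun u _ => sum_comm, sum_comm]
  rw [hB, hsum f a S hS hfS, hsum g b T hT hgT]
  calc _ ≤ ∑ k ∈ range n, ∑ l ∈ range n, a k * b l * (d / n * (((k : ℝ) + 1) * ((l : ℝ) + 1)) +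
        α * ((√((k : ℝ) + 1) + ((k : ℝ) + 1) / √m) * (√((l : ℝ) + 1) + ((l : ℝ) + 1) / √m))) := by
        refine sum_le_sum fun k hk => sum_le_sum fun l hl => ?_
        refine mul_le_mul_of_nonneg_left ?_ (mul_nonneg (ha k) (hb l))
        have := h.bipCount_le hα hm hmδ (S k) (T l)
        rw [hS k hk, hT l hl] at this
        exact_mod_cast this
    _ = d / n * ((∑ k ∈ range n, a k * ((k : ℝ) + 1)) * ∑ l ∈ range n, b l * ((l : ℝ) + 1)) +
        α * ((∑ k ∈ range n, a k * √((k : ℝ) + 1) + (∑ k ∈ range n, a k * ((k : ℝ) + 1)) / √m) *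
        (∑ l ∈ range n, b l * √((l : ℝ) + 1) + (∑ l ∈ range n, b l * ((l : ℝ) + 1)) / √m)) := by
        rw [sum_div, sum_div, ← sum_add_distrib, ← sum_add_distrib, sum_mul_sum, sum_mul_sum,
          mul_sum, mul_sum, ← sum_add_distrib]
        refine sum_congr rfl fun k _ => ?_
        rw [mul_sum, mul_sum, ← sum_add_distrib]
        refine sum_congr rfl fun l _ => ?_
        ring
    _ ≤ _ := by
        have hp : ∀ c : ℕ → ℝ, (∀ k, 0 ≤ c k) →
            0 ≤ ∑ k ∈ range n, c k * √((k : ℝ) + 1) ∧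
            0 ≤ (∑ k ∈ range n, c k * ((k : ℝ) + 1)) / √m := fun c hc =>
          ⟨sum_nonneg fun k _ => mul_nonneg (hc k) (by positivity),
            div_nonneg (sum_nonneg fun k _ => mul_nonneg (hc k) (by positivity)) (by positivity)⟩
        obtain ⟨p1, p2⟩ := hp a ha
        obtain ⟨p3, p4⟩ := hp b hb
        have p5 := p1.trans hfa
        gcongr

theorem walkMatrix_mulVec_apply {n : ℕ} (G : SimpleGraph (Fin n)) [DecidableRel G.Adj] (d : ℕ)
    (q : Fin n → ℝ) (u : Fin n) :
    (walkMatrix G d).mulVec q u = (d : ℝ)⁻¹ * ∑ v, G.adjMatrix ℝ u v * q v := by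
  rw [walkMatrix, Matrix.smul_mulVec, Pi.smul_apply, smul_eq_mul]
  rfl

theorem IsProbDist.walkMatrix_mulVec {n d : ℕ} {G : SimpleGraph (Fin n)} [DecidableRel G.Adj]
    (hG : G.IsRegularOfDegree d) (hd : 0 < d) {q : Fin n → ℝ} (hq : IsProbDist q) :
    IsProbDist ((walkMatrix G d).mulVec q) := by
  refine ⟨fun u => ?_, ?_⟩
  · rw [walkMatrix_mulVec_apply]
    refine mul_nonneg (by positivity) (sum_nonneg fun v _ => mul_nonneg ?_ (hq.1 v))
    rw [SimpleGraph.adjMatrix_apply]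
    split_ifs <;> norm_num
  · have hcol : ∀ v, ∑ u, G.adjMatrix ℝ u v = d := by
      intro v
      simp_rw [SimpleGraph.adjMatrix_apply, G.adj_comm _ v]
      rw [sum_boole, ← hG.degree_eq v, ← G.card_neighborFinset_eq_degree,
        G.neighborFinset_eq_filter]
    simp only [walkMatrix_mulVec_apply]
    rw [← mul_sum, sum_comm]
    simp only [← sum_mul, hcol]
    rw [← mul_sum, hq.2, mul_one, inv_mul_cancel₀ (by positivity)]

theorem IsProbDist.walkMatrix_pow_mulVec {n d : ℕ} {G : SimpleGraph (Fin n)} [DecidableRel G.Adj]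
    (hG : G.IsRegularOfDegree d) (hd : 0 < d) {p : Fin n → ℝ} (hp : IsProbDist p) (t : ℕ) :
    IsProbDist ((walkMatrix G d ^ t).mulVec p) := by
  induction t with
  | zero => simpa using hp
  | succ t ih =>
    rw [pow_succ', ← Matrix.mulVec_mulVec]
    exact ih.walkMatrix_mulVec hG hd

theorem IsProbDist.one_le_card_mul_sum_sq {n : ℕ} {p : Fin n → ℝ} (hp : IsProbDist p) :
    1 ≤ n * ∑ v, p v ^ 2 := by
  have := sq_sum_le_card_mul_sum_sq (s := univ) (f := p)
  simpa [hp.2] using this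

theorem IsProbDist.sum_sq_le_one {n : ℕ} {p : Fin n → ℝ} (hp : IsProbDist p) :
    ∑ v, p v ^ 2 ≤ 1 := by
  rw [← hp.2]
  refine sum_le_sum fun v _ => ?_
  have h1 : p v ≤ 1 := hp.2 ▸ single_le_sum (fun i _ => hp.1 i) (mem_univ v)
  nlinarith [hp.1 v]

theorem IsProbDist.tvFromUniform_le {n : ℕ} {p : Fin n → ℝ} (hp : IsProbDist p) :
    tvFromUniform p ≤ (1 / 2) * √(n * ∑ v, p v ^ 2 - 1) := by
  have hn : (n : ℝ) ≠ 0 := by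
    rintro h
    have := hp.one_le_card_mul_sum_sq
    rw [h, zero_mul] at this
    linarith
  rw [tvFromUniform]
  refine mul_le_mul_of_nonneg_left (Real.le_sqrt_of_sq_le ?_) (by norm_num)
  refine (sq_sum_le_card_mul_sum_sq (s := univ)).trans_eq ?_
  simp only [sq_abs, sub_sq, sum_add_distrib, sum_sub_distrib, ← sum_mul, ← mul_sum, hp.2,
    card_univ, Fintype.card_fin, sum_const, nsmul_eq_mul]
  field_simp
  ring

/-- One step of the walk contracts the normalised `L²` norm towards `1`. -/
theorem SmallSetBipDensity.sum_sq_step {n d : ℕ} {G : SimpleGraph (Fin n)} [DecidableRel G.Adj]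
    {α δ : ℝ} (h : SmallSetBipDensity G d α δ) (hα : 0 ≤ α) {m : ℕ} (hm : 0 < m)
    (hmδ : (m : ℝ) ≤ δ * n) (hG : G.IsRegularOfDegree d) (hd : 0 < d) {q : Fin n → ℝ}
    (hq : IsProbDist q) :
    √(n * ∑ v, (walkMatrix G d).mulVec q v ^ 2) ≤
      1 + (α / d * (1 + Real.log n) + α / d * (√(1 + Real.log n) * √(n / m))) *
          √(n * ∑ v, q v ^ 2) +
        (α / d * (√(1 + Real.log n) * √(n / m)) + α / d * (n / m)) := by
  have hq' := hq.walkMatrix_mulVec hG hd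
  set q' := (walkMatrix G d).mulVec q with hq'def
  have hn0 : n ≠ 0 := by
    rintro rfl
    simpa using hq.2
  have hn : (0 : ℝ) < n := by positivity
  have hd' : (0 : ℝ) < d := by positivity
  have hm' : (0 : ℝ) < m := by positivity
  have hL : 0 ≤ 1 + Real.log n := by
    have := Real.log_natCast_nonneg n
    linarith
  have hb := h.bilin_le hα hm hmδ q' q hq'.1 hq.1
  rw [hq'.2, hq.2] at hb
  have hlhs : ∑ u, ∑ v, q' u * G.adjMatrix ℝ u v * q v = d * ∑ u, q' u ^ 2 := by
    rw [mul_sum]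
    refine sum_congr rfl fun u _ => ?_
    have : ∑ v, G.adjMatrix ℝ u v * q v = d * q' u := by
      rw [hq'def, walkMatrix_mulVec_apply, mul_inv_cancel_left₀ hd'.ne']
    simp only [mul_assoc]
    rw [← mul_sum, this]
    ring
  rw [hlhs] at hb
  have hy1 : 1 ≤ √(n * ∑ v, q' v ^ 2) := Real.one_le_sqrt.2 hq'.one_le_card_mul_sum_sq
  have hy0 : 0 ≤ √(n * ∑ v, q v ^ 2) := Real.sqrt_nonneg _
  have hy'sq := Real.sq_sqrt (zero_le_one.trans hq'.one_le_card_mul_sum_sq)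
  have hwsq := Real.sq_sqrt (by positivity : (0 : ℝ) ≤ n / m)
  have hLsq := Real.sq_sqrt hL
  have hw0 : 0 ≤ √((n : ℝ) / m) := Real.sqrt_nonneg _
  have hl0 := Real.sqrt_nonneg (1 + Real.log n)
  have hε : 0 ≤ α / d := by positivity
  have key : n * ∑ v, q' v ^ 2 ≤ 1 + α / d * ((√(1 + Real.log n) * √(n * ∑ v, q' v ^ 2) +
      √(n / m)) * (√(1 + Real.log n) * √(n * ∑ v, q v ^ 2) + √(n / m))) := by
    rw [Real.sqrt_mul hn.le, Real.sqrt_mul hn.le, Real.sqrt_div hn.le]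
    have hsn := Real.mul_self_sqrt hn.le
    refine le_of_mul_le_mul_left ?_ (div_pos hd' hn)
    calc (d : ℝ) / n * (n * ∑ v, q' v ^ 2) = d * ∑ v, q' v ^ 2 := by field_simp
      _ ≤ _ := hb
      _ = d / n + α * (√n * √n) / n *
          ((√(1 + Real.log n) * √(∑ i, q' i ^ 2) + 1 / √m) *
            (√(1 + Real.log n) * √(∑ i, q i ^ 2) + 1 / √m)) := by
          rw [hsn]; field_simp
      _ = _ := by field_simp
  rw [← hwsq, ← hLsq]
  rw [Real.sqrt_sq hl0, Real.sqrt_sq hw0]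
  set y' := √(n * ∑ v, q' v ^ 2)
  set y := √(n * ∑ v, q v ^ 2)
  set w := √((n : ℝ) / m)
  set l := √(1 + Real.log n)
  set e := α / d
  rw [← hy'sq] at key
  refine le_of_mul_le_mul_left ?_ (zero_lt_one.trans_le hy1)
  have h1 : 0 ≤ (y' - 1) * (e * (l * w) * y) :=
    mul_nonneg (sub_nonneg.2 hy1) (by positivity)
  have h2 : 0 ≤ (y' - 1) * (e * w ^ 2) := mul_nonneg (sub_nonneg.2 hy1) (by positivity)
  nlinarith

theorem SmallSetBipDensity.tvFromUniform_walk_le {n d : ℕ} {G : SimpleGraph (Fin n)}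
    [DecidableRel G.Adj] {α δ : ℝ} (h : SmallSetBipDensity G d α δ) (hα : 0 ≤ α) {m : ℕ}
    (hm : 0 < m) (hmδ : (m : ℝ) ≤ δ * n) (hG : G.IsRegularOfDegree d) (hd : 0 < d)
    {u r : ℝ} (hu0 : 0 ≤ u) (hu1 : u ≤ 1) (hr0 : 0 ≤ r) (hr1 : r ≤ 1)
    (hL : α / d * (1 + Real.log n) ≤ u / 4)
    (hLm : α / d * (√(1 + Real.log n) * √(n / m)) ≤ u / 4)
    (hnm : α / d * (n / m) ≤ 2 * r) {t : ℕ} (ht : u ^ t * √n ≤ u)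
    {p : Fin n → ℝ} (hp : IsProbDist p) :
    tvFromUniform ((walkMatrix G d ^ t).mulVec p) ≤ 3 * √(u + r) := by
  have hprob := fun s => hp.walkMatrix_pow_mulVec hG hd s
  have hiter : ∀ s : ℕ, √(n * ∑ v, (walkMatrix G d ^ s).mulVec p v ^ 2) ≤
      (1 + u / 4 + 2 * r) * (1 + u) + u ^ s * √n := by
    intro s
    induction s with
    | zero =>
      have h1 : √(n * ∑ v, p v ^ 2) ≤ √n :=
        Real.sqrt_le_sqrt (mul_le_of_le_one_right (by positivity) hp.sum_sq_le_one)
      simp only [pow_zero, Matrix.one_mulVec, one_mul]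
      have : 0 ≤ (1 + u / 4 + 2 * r) * (1 + u) := by positivity
      linarith
    | succ s ih =>
      have hstep := h.sum_sq_step hα hm hmδ hG hd (hprob s)
      rw [Matrix.mulVec_mulVec, ← pow_succ'] at hstep
      set y := √(n * ∑ v, (walkMatrix G d ^ s).mulVec p v ^ 2)
      have hy0 : 0 ≤ y := Real.sqrt_nonneg _
      refine hstep.trans ?_
      have h1 := mul_le_mul_of_nonneg_right (add_le_add hL hLm) hy0
      have h2 := mul_le_mul_of_nonneg_left ih (by positivity : 0 ≤ u / 2)
      have h3 : 0 ≤ u ^ s * √n * u := by positivity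
      have h4 : 0 ≤ (1 + u / 4 + 2 * r) * (u * (1 - u)) :=
        mul_nonneg (by positivity) (mul_nonneg hu0 (sub_nonneg.2 hu1))
      rw [pow_succ]
      nlinarith
  have hy := hiter t
  have hy1 := (hprob t).one_le_card_mul_sum_sq
  refine (hprob t).tvFromUniform_le.trans ?_
  have hsq := Real.sq_sqrt (zero_le_one.trans hy1)
  have hle : √(n * ∑ v, (walkMatrix G d ^ t).mulVec p v ^ 2) ≤ 1 + (3 * u + 4 * r) := by
    nlinarith [mul_nonneg hr0 (sub_nonneg.2 hu1), mul_nonneg hu0 (sub_nonneg.2 hu1)]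
  have hle2 : n * ∑ v, (walkMatrix G d ^ t).mulVec p v ^ 2 - 1 ≤ 6 ^ 2 * (u + r) := by
    have h0 : 0 ≤ √(n * ∑ v, (walkMatrix G d ^ t).mulVec p v ^ 2) := Real.sqrt_nonneg _
    rw [← hsq]
    have h1 := pow_le_pow_left₀ h0 hle 2
    have h2 : (3 * u + 4 * r) * (3 * u + 4 * r) ≤ (3 * u + 4 * r) * 7 :=
      mul_le_mul_of_nonneg_left (by linarith) (by positivity)
    nlinarith
  calc _ ≤ (1 / 2) * √(6 ^ 2 * (u + r)) := by gcongr
    _ = 3 * √(u + r) := by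
      rw [Real.sqrt_mul (by norm_num), Real.sqrt_sq (by norm_num)]
      ring

theorem three_mul_sqrt_add_le {u r δ : ℝ} (hu0 : 0 ≤ u) (hu1 : u ≤ 1) (hδ0 : 0 < δ)
    (hr : r = u ^ 4 / δ) (hrC : r ≤ (1 / 32) ^ 2) :
    3 * √(u + r) ≤ 1 / 4 * √(1 - δ) + 6 * √u := by
  rcases le_total (1 / 2) δ with h | h
  · have h1 : r ≤ 3 * u := by
      rw [hr, div_le_iff₀ hδ0]
      have : u ^ 4 ≤ u := by simpa using pow_le_pow_of_le_one hu0 hu1 (show 1 ≤ 4 by norm_num)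
      nlinarith
    have h2 : √(u + r) ≤ 2 * √u := by
      rw [show 2 * √u = √(2 ^ 2 * u) by
        rw [Real.sqrt_mul (by norm_num), Real.sqrt_sq (by norm_num)]]
      exact Real.sqrt_le_sqrt (by linarith)
    have := Real.sqrt_nonneg (1 - δ)
    linarith
  · have hr0 : 0 ≤ r := hr ▸ by positivity
    have h1 : √(u + r) ≤ √u + √r := by
      refine Real.sqrt_le_iff.2 ⟨by positivity, ?_⟩
      nlinarith [Real.sq_sqrt hu0, Real.sq_sqrt hr0, Real.sqrt_nonneg u, Real.sqrt_nonneg r,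
        mul_nonneg (Real.sqrt_nonneg u) (Real.sqrt_nonneg r)]
    have h2 : √r ≤ 1 / 32 := Real.sqrt_le_iff.2 ⟨by norm_num, hrC⟩
    have h3 : 3 / 8 ≤ √(1 - δ) := Real.le_sqrt_of_sq_le (by linarith)
    have := Real.sqrt_nonneg u
    linarith

/-- variation distance bound from small-set bipartite density. -/
theorem variation_distance_upper_bound_of_small_set_bipartite_density
    (ξ : ℝ) (hξ0 : 0 < ξ) (hξ1 : ξ ≤ 1) :
    ∃ C₀ C₁ : ℝ, 0 < C₀ ∧ 0 < C₁ ∧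
      ∀ (n d : ℕ) (G : SimpleGraph (Fin n)) [DecidableRel G.Adj] (α δ : ℝ),
        G.IsRegularOfDegree d →
        (d : ℝ) = (n : ℝ) ^ ξ →
        Real.sqrt d < α → α ≤ d →
        α ≤ d / (C₀ * Real.log d ^ 2) →
        0 < δ → δ ≤ 1 → C₀ * α / d ≤ δ →
        SmallSetBipDensity G d α δ →
        ∀ t : ℕ,
          4 / ((1 - Real.log α / Real.log d) * ξ) + 1 ≤ (t : ℝ) →
          dTV G d t ≤ (1 / 4) * Real.sqrt (1 - δ) +
            C₁ / (n : ℝ) ^ ((1 - Real.log α / Real.log d) * ξ / 8) := by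
  refine ⟨(32 / ξ) ^ 2, 6, by positivity, by norm_num, ?_⟩
  intro n d G _ α δ hG hdn hsα hαd hαC hδ0 hδ1 hδ hden t ht
  have hα0 : 0 < α := (Real.sqrt_nonneg _).trans_lt hsα
  have hd2 : 2 ≤ d := by
    by_contra hlt
    have hlog : Real.log d = 0 := by
      have : d = 0 ∨ d = 1 := by omega
      rcases this with rfl | rfl <;> simp
    rw [hlog] at hαC
    norm_num at hαC
    linarith
  have hd2' : (2 : ℝ) ≤ d := by exact_mod_cast hd2
  have hd0 : (0 : ℝ) < d := by linarith
  have hα1 : 1 < α := (Real.one_le_sqrt.2 (by linarith)).trans_lt hsα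
  have hn1 : 1 ≤ n := by
    rcases Nat.eq_zero_or_pos n with rfl | h
    · rw [Nat.cast_zero, Real.zero_rpow hξ0.ne'] at hdn
      linarith
    · exact h
  have hn1' : (1 : ℝ) ≤ n := by exact_mod_cast hn1
  have hn0 : (0 : ℝ) < n := by linarith
  have hdlen : (d : ℝ) ≤ n := by
    rw [hdn]
    exact (Real.rpow_le_rpow_of_exponent_le hn1' hξ1).trans_eq (Real.rpow_one _)
  have hlogd : Real.log d = ξ * Real.log n := by rw [hdn, Real.log_rpow hn0]
  have hlogn0 := Real.log_nonneg hn1'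
  have hlogd2 : 1 / 2 ≤ Real.log d := by
    have := Real.log_le_log (by norm_num) hd2'
    linarith [Real.log_two_gt_d9]
  have hlogd0 : 0 < Real.log d := by linarith
  have hlogα0 := Real.log_nonneg hα1.le
  set κ := (1 - Real.log α / Real.log d) * ξ with hκ
  have hκn : κ * Real.log n = Real.log d - Real.log α := by
    rw [hκ, mul_assoc, ← hlogd]
    field_simp
  have hκ1 : κ ≤ 1 := by
    have : 0 ≤ Real.log α / Real.log d := by positivity
    nlinarith
  have hlogαd : Real.log α < Real.log d := by
    refine Real.log_lt_log hα0 (hαC.trans_lt (div_lt_self hd0 ?_))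
    have : 32 ≤ 32 / ξ := by
      rw [le_div_iff₀ hξ0]; linarith
    rw [← mul_pow]
    exact one_lt_pow₀ (by nlinarith) two_ne_zero
  have hκ0 : 0 < κ := by
    have : 0 < 1 - Real.log α / Real.log d := by
      rw [sub_pos, div_lt_one hlogd0]
      exact hlogαd
    positivity
  set u := Real.exp (-(κ * Real.log n) / 4) with hu
  have hu0 : 0 < u := Real.exp_pos _
  have hu1 : u ≤ 1 := Real.exp_le_one_iff.2 (by nlinarith)
  have hε : α / d = u ^ 4 := by
    rw [hu, ← Real.exp_nat_mul, hκn]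
    rw [show ((4 : ℕ) : ℝ) * (-(Real.log d - Real.log α) / 4) = Real.log α - Real.log d by
      push_cast; ring, Real.exp_sub, Real.exp_log hα0, Real.exp_log hd0]
  set r := α / d / δ with hr
  have hr0 : 0 ≤ r := by positivity
  have hrC : r ≤ (1 / 32) ^ 2 := by
    have h1 : (32 / ξ) ^ 2 * r ≤ 1 := by
      rw [hr, ← mul_div_assoc, div_le_one hδ0, ← mul_div_assoc]
      exact hδ
    have h2 : (32 : ℝ) ^ 2 ≤ (32 / ξ) ^ 2 := by
      gcongr
      rw [le_div_iff₀ hξ0]; linarith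
    have := mul_le_mul_of_nonneg_right h2 hr0
    linarith
  have hδn : 1 ≤ δ * n := by
    have h2 : (1 : ℝ) ≤ (32 / ξ) ^ 2 := by
      refine one_le_pow₀ ?_
      rw [le_div_iff₀ hξ0]; linarith
    calc (1 : ℝ) ≤ (32 / ξ) ^ 2 * α := one_le_mul_of_one_le_of_one_le h2 hα1.le
      _ = (32 / ξ) ^ 2 * α / d * d := by field_simp
      _ ≤ δ * n := by gcongr
  have hm : 0 < ⌊δ * n⌋₊ := Nat.floor_pos.2 hδn
  have hmδ : (⌊δ * n⌋₊ : ℝ) ≤ δ * n := Nat.floor_le (by positivity)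
  have hm2 : δ * n ≤ 2 * ⌊δ * n⌋₊ := by
    have h1 := Nat.lt_floor_add_one (δ * n)
    have h2 : (1 : ℝ) ≤ ⌊δ * n⌋₊ := by exact_mod_cast hm
    linarith
  set m := ⌊δ * n⌋₊
  have hm' : (0 : ℝ) < m := by exact_mod_cast hm
  have hnm : α / d * (n / m) ≤ 2 * r := by
    have : (n : ℝ) / m ≤ 2 / δ := by
      rw [div_le_div_iff₀ hm' hδ0]
      linarith
    calc α / d * (n / m) ≤ α / d * (2 / δ) := by gcongr
      _ = 2 * r := by rw [hr]; ring
  have hu2 : u ^ 2 * (32 / ξ * Real.log d) ≤ 1 := by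
    have h1 : u ^ 4 * ((32 / ξ) ^ 2 * Real.log d ^ 2) ≤ 1 := by
      rw [← hε, div_mul_eq_mul_div, div_le_one hd0]
      exact (le_div_iff₀ (by positivity)).1 hαC
    refine (sq_le_one_iff₀ (by positivity)).1 (le_trans (le_of_eq ?_) h1)
    ring
  have hLu : α / d * (1 + Real.log n) ≤ 3 / 32 * u ^ 2 := by
    have h1 : Real.log n = Real.log d / ξ := by rw [hlogd]; field_simp
    have h2 : 1 ≤ 2 * (Real.log d / ξ) := by
      have : Real.log d ≤ Real.log d / ξ := le_div_self hlogd0.le hξ0 hξ1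
      linarith
    calc α / d * (1 + Real.log n) ≤ u ^ 4 * (3 * (Real.log d / ξ)) := by
          rw [hε]; gcongr; linarith
      _ = 3 / 32 * u ^ 2 * (u ^ 2 * (32 / ξ * Real.log d)) := by field_simp
      _ ≤ 3 / 32 * u ^ 2 * 1 := by gcongr
      _ = _ := mul_one _
  have hL : α / d * (1 + Real.log n) ≤ u / 4 := by nlinarith
  have hLm : α / d * (√(1 + Real.log n) * √(n / m)) ≤ u / 4 := by
    have hL0 : 0 ≤ 1 + Real.log n := by linarith
    refine (pow_le_pow_iff_left₀ (by positivity) (by positivity) two_ne_zero).1 ?_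
    calc (α / d * (√(1 + Real.log n) * √(n / m))) ^ 2
        = (α / d * (1 + Real.log n)) * (α / d * (n / m)) := by
          rw [mul_pow, mul_pow, Real.sq_sqrt hL0, Real.sq_sqrt (by positivity)]
          ring
      _ ≤ (3 / 32 * u ^ 2) * (2 * (1 / 32) ^ 2) :=
          mul_le_mul hLu (hnm.trans (by linarith)) (by positivity) (by positivity)
      _ ≤ (u / 4) ^ 2 := by linarith [sq_nonneg u]
  have hut : u ^ t * √n ≤ u := by
    have hsn : √(n : ℝ) = Real.exp (Real.log n / 2) := by
      rw [Real.exp_half, Real.exp_log hn0]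
    rw [hsn, hu, ← Real.exp_nat_mul, ← Real.exp_add]
    refine Real.exp_le_exp.2 ?_
    have h1 : 4 ≤ κ * t := by
      have : 4 / κ ≤ t := by linarith
      rw [div_le_iff₀ hκ0] at this
      linarith
    linarith [mul_le_mul_of_nonneg_right h1 hlogn0, mul_le_mul_of_nonneg_right hκ1 hlogn0]
  have hnk : 6 / (n : ℝ) ^ (κ / 8) = 6 * √u := by
    rw [Real.rpow_def_of_pos hn0, hu, ← Real.exp_half, div_eq_mul_inv, ← Real.exp_neg]
    congr 2
    ring
  rw [hnk]
  have hmain := three_mul_sqrt_add_le hu0.le hu1 hδ0 (by rw [hr, hε]) hrC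
  refine Real.sSup_le ?_ (by positivity)
  rintro x ⟨p, hp, rfl⟩
  exact (hden.tvFromUniform_walk_le hα0.le hm hmδ hG (by omega) hu0.le hu1 hr0 (by linarith)
    hL hLm hnm hut hp).trans hmain
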